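/- (Corollary 2, part 2: missingness-adjusted inverse probability weighting.) Fix d = (d1,d2) in {(1,1),(0,1),(1,0)} and d' = (0,0), with P(D = d) > 0. Suppose Assumption DID holds for d and for d', Assumption MAR holds, P(D = d | X) > 0 and P(D = d' | X) > 0 a.s., and all displayed expectations are finite. Write q_{D2}(X) for the random variable equal to q_{d2}(X) on {D2 = d2}, d2 in {0,1}. Then E[p_d(X)]^{-1} · E[(S/q_{D2}(X)) · (1{D = d} − (p_d(X)/p_{d'}(X)) · 1{D = d'}) · ΔY] = τ_{dd'}. -/

import Mathlib

open MeasureTheory Set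
open scoped Classical

noncomputable section

namespace DIDMissing

variable {Ω : Type*} {𝓧 : Type*}

/-- Real-valued indicator of a set. -/
def ind (A : Set Ω) : Ω → ℝ := A.indicator fun _ => (1 : ℝ)

/-- All treatment paths `{0,1}²` (coded as reals). -/
def allPaths : Set (ℝ × ℝ) := {(0, 0), (0, 1), (1, 0), (1, 1)}

/-- The three treated paths `{(1,1), (0,1), (1,0)}`. -/
def threePaths : Set (ℝ × ℝ) := {(1, 1), (0, 1), (1, 0)}

/-- The event `{D = d}` for a treatment path `d = (d₁, d₂)`. -/
def evD (D1 D2 : Ω → ℝ) (d : ℝ × ℝ) : Set Ω := {ω | D1 ω = d.1 ∧ D2 ω = d.2}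

/-- The event `{D₂ = b}`. -/
def evD2 (D2 : Ω → ℝ) (b : ℝ) : Set Ω := {ω | D2 ω = b}

/-- `g` is a (measurable-in-the-covariate) version of the conditional mean `E[Z ∣ A, X]`:
for every bounded measurable `h`, `E[1_A · Z · h(X)] = E[1_A · g(X) · h(X)]`. -/
def IsCondMeanGiven [MeasurableSpace Ω] [MeasurableSpace 𝓧] (P : Measure Ω) (X : Ω → 𝓧)
    (A : Set Ω) (Z : Ω → ℝ) (g : 𝓧 → ℝ) : Prop :=
  Measurable g ∧
    ∀ h : 𝓧 → ℝ, Measurable h → (∃ C, ∀ x, |h x| ≤ C) →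
      ∫ ω, ind A ω * Z ω * h (X ω) ∂P = ∫ ω, ind A ω * g (X ω) * h (X ω) ∂P

/-- Assumption DID for a path `d` relative to `d' = (0,0)`:
(i) no anticipation, `E[Y₀(d) ∣ D = d, X] = E[Y₀(0,0) ∣ D = d, X]` a.s., stated in the
version-free integral form; and (ii) conditional parallel trends, stated as the existence
of a common version of `E[Y₂(0,0) − Y₀(0,0) ∣ X]` and `E[Y₂(0,0) − Y₀(0,0) ∣ D = d, X]`. -/
def DID [MeasurableSpace Ω] [MeasurableSpace 𝓧] (P : Measure Ω) (X : Ω → 𝓧)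
    (D1 D2 : Ω → ℝ) (Y0p Y2p : ℝ × ℝ → Ω → ℝ) (d : ℝ × ℝ) : Prop :=
  (∀ h : 𝓧 → ℝ, Measurable h → (∃ C, ∀ x, |h x| ≤ C) →
      ∫ ω, ind (evD D1 D2 d) ω * Y0p d ω * h (X ω) ∂P
        = ∫ ω, ind (evD D1 D2 d) ω * Y0p (0, 0) ω * h (X ω) ∂P) ∧
  (∃ tr : 𝓧 → ℝ,
      IsCondMeanGiven P X Set.univ (fun ω => Y2p (0, 0) ω - Y0p (0, 0) ω) tr ∧
      IsCondMeanGiven P X (evD D1 D2 d) (fun ω => Y2p (0, 0) ω - Y0p (0, 0) ω) tr)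

/-- Assumption MAR: `S ⟂ (D₁, ΔY) ∣ (D₂, X)`, where `q d₂` is a version of the
missing-data probability `P(S = 1 ∣ D₂ = d₂, X)`, which is `(0,1]`-valued a.s. -/
def MAR [MeasurableSpace Ω] [MeasurableSpace 𝓧] (P : Measure Ω) (X : Ω → 𝓧)
    (D1 D2 S Y0 Y2 : Ω → ℝ) (q : ℝ → 𝓧 → ℝ) : Prop :=
  (∀ d2 ∈ ({0, 1} : Set ℝ), IsCondMeanGiven P X (evD2 D2 d2) S (q d2)) ∧
  (∀ d2 ∈ ({0, 1} : Set ℝ), ∀ᵐ ω ∂P, 0 < q d2 (X ω) ∧ q d2 (X ω) ≤ 1) ∧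
  (∀ d2 ∈ ({0, 1} : Set ℝ), ∀ f : ℝ × ℝ → ℝ, Measurable f → (∃ C, ∀ p, |f p| ≤ C) →
      ∀ h : 𝓧 → ℝ, Measurable h → (∃ C, ∀ x, |h x| ≤ C) →
        ∫ ω, ind (evD2 D2 d2) ω * S ω * f (D1 ω, Y2 ω - Y0 ω) * h (X ω) ∂P
          = ∫ ω, ind (evD2 D2 d2) ω * q d2 (X ω) * f (D1 ω, Y2 ω - Y0 ω) * h (X ω) ∂P)

/-- The path-dependent ATT `τ_{d,(0,0)} = E[Y₂(d) − Y₂(0,0) ∣ D = d]`. -/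
def tau [MeasurableSpace Ω] (P : Measure Ω) (D1 D2 : Ω → ℝ)
    (Y2p : ℝ × ℝ → Ω → ℝ) (d : ℝ × ℝ) : ℝ :=
  (P (evD D1 D2 d)).toReal⁻¹ * ∫ ω in evD D1 D2 d, (Y2p d ω - Y2p (0, 0) ω) ∂P

lemma ind_meas [MeasurableSpace Ω] {A : Set Ω} (hA : MeasurableSet A) : Measurable (ind A) :=
  measurable_const.indicator hA

lemma ind_mul (A : Set Ω) (f : Ω → ℝ) : (fun ω => ind A ω * f ω) = A.indicator f := by
  funext ω
  by_cases h : ω ∈ A <;> simp [ind, h]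

lemma ind_abs (A : Set Ω) (ω : Ω) : |ind A ω| ≤ 1 := by
  by_cases h : ω ∈ A <;> simp [ind, h]

lemma ind_mul_int [MeasurableSpace Ω] {P : Measure Ω} {A : Set Ω} (hA : MeasurableSet A)
    {f : Ω → ℝ} (hf : Integrable f P) : Integrable (fun ω => ind A ω * f ω) P := by
  rw [ind_mul]; exact hf.indicator hA

lemma condExp_eq_of_test [MeasurableSpace Ω] [m𝓧 : MeasurableSpace 𝓧]
    (P : Measure Ω) [IsProbabilityMeasure P] (X : Ω → 𝓧) (hX : Measurable X)
    (U V : Ω → ℝ) (hU : Integrable U P) (hV : Integrable V P)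
    (h : ∀ t : Set 𝓧, MeasurableSet t →
      ∫ ω, U ω * ind t (X ω) ∂P = ∫ ω, V ω * ind t (X ω) ∂P) :
    P[U | m𝓧.comap X] =ᵐ[P] P[V | m𝓧.comap X] := by
  have hm : m𝓧.comap X ≤ ‹MeasurableSpace Ω› := hX.comap_le
  have key : ∀ (W : Ω → ℝ) (t : Set 𝓧), MeasurableSet t →
      ∫ ω, W ω * ind t (X ω) ∂P = ∫ ω in X ⁻¹' t, W ω ∂P := by
    intro W t ht
    rw [← integral_indicator (hX ht)]
    congr 1
    funext ω
    by_cases hω : X ω ∈ t <;> simp [ind, hω]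
  refine ae_eq_condExp_of_forall_setIntegral_eq hm hV
    (fun s _ _ => integrable_condExp.integrableOn) ?_
    stronglyMeasurable_condExp.aestronglyMeasurable
  rintro s ⟨t, ht, rfl⟩ _
  rw [setIntegral_condExp hm hU ⟨t, ht, rfl⟩, ← key U t ht, ← key V t ht, h t ht]

lemma condMean_condExp [MeasurableSpace Ω] [m𝓧 : MeasurableSpace 𝓧]
    (P : Measure Ω) [IsProbabilityMeasure P] (X : Ω → 𝓧) (hX : Measurable X)
    (A : Set Ω) (hA : MeasurableSet A) (Z : Ω → ℝ) (hZ : Integrable Z P) (g : 𝓧 → ℝ)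
    (hg : IsCondMeanGiven P X A Z g) :
    P[fun ω => ind A ω * Z ω | m𝓧.comap X] =ᵐ[P]
      fun ω => (P[ind A | m𝓧.comap X]) ω * g (X ω) := by
  have hm : m𝓧.comap X ≤ ‹MeasurableSpace Ω› := hX.comap_le
  obtain ⟨hgm, hg⟩ := hg
  have hXm : Measurable[m𝓧.comap X] X := comap_measurable X
  have hAi : Integrable (ind A) P := (integrable_const (1:ℝ)).indicator hA
  have hAZ : Integrable (fun ω => ind A ω * Z ω) P := ind_mul_int hA hZ
  have main : ∀ n : ℕ, ∀ᵐ ω ∂P, |g (X ω)| ≤ n →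
      (P[fun ω => ind A ω * Z ω | m𝓧.comap X]) ω
        = (P[ind A | m𝓧.comap X]) ω * g (X ω) := by
    intro n
    set B : Set 𝓧 := {x | |g x| ≤ n} with hB
    have hBm : MeasurableSet B := measurableSet_le hgm.abs measurable_const
    have hb1 : StronglyMeasurable[m𝓧.comap X] (fun ω => ind B (X ω)) :=
      ((ind_meas hBm).comp hXm).stronglyMeasurable
    have hb2 : StronglyMeasurable[m𝓧.comap X] (fun ω => ind B (X ω) * g (X ω)) :=
      (((ind_meas hBm).mul hgm).comp hXm).stronglyMeasurable
    have hI1 : Integrable ((fun ω => ind B (X ω)) * fun ω => ind A ω * Z ω) P :=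
      hAZ.bdd_mul (c := 1) (hb1.mono hm).aestronglyMeasurable
        (Filter.Eventually.of_forall fun ω => ind_abs B (X ω))
    have hI2 : Integrable ((fun ω => ind B (X ω) * g (X ω)) * ind A) P := by
      refine hAi.bdd_mul (c := n) (hb2.mono hm).aestronglyMeasurable
        (Filter.Eventually.of_forall fun ω => ?_)
      by_cases hω : X ω ∈ B
      · have hn : |g (X ω)| ≤ n := hω
        have h1 : ind B (X ω) = 1 := by simp only [ind, Set.indicator_of_mem hω]
        rw [h1, one_mul, Real.norm_eq_abs]
        exact hn
      · simp [ind, hω]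
    have e := condExp_eq_of_test P X hX _ _ hI1 hI2 (by
      intro t ht
      have := hg (fun x => ind B x * ind t x) ((ind_meas hBm).mul (ind_meas ht))
        ⟨1, fun x => by
          rw [abs_mul]
          exact mul_le_one₀ (ind_abs B x) (abs_nonneg _) (ind_abs t x)⟩
      calc _ = _ := integral_congr_ae (Filter.Eventually.of_forall fun ω => by
                  simp only [Pi.mul_apply]; ring)
        _ = _ := this
        _ = _ := integral_congr_ae (Filter.Eventually.of_forall fun ω => by
                  simp only [Pi.mul_apply]; ring))
    have e1 := condExp_mul_of_stronglyMeasurable_left hb1 hI1 hAZ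
    have e2 := condExp_mul_of_stronglyMeasurable_left hb2 hI2 hAi
    filter_upwards [e, e1, e2] with ω h h1 h2 hn
    rw [h1, h2] at h
    have hω : X ω ∈ B := hn
    have hb : ind B (X ω) = 1 := by simp only [ind, Set.indicator_of_mem hω]
    simp only [Pi.mul_apply, hb, one_mul] at h
    rw [h, mul_comm]
  filter_upwards [ae_all_iff.2 main] with ω hω
  obtain ⟨n, hn⟩ := exists_nat_ge |g (X ω)|
  exact hω n hn

lemma mar_ext [MeasurableSpace Ω] [m𝓧 : MeasurableSpace 𝓧]
    (P : Measure Ω) [IsProbabilityMeasure P] (X : Ω → 𝓧) (hX : Measurable X)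
    (V : Ω → ℝ × ℝ) (hV : Measurable V) (a b : Ω → ℝ) (ha : Measurable a) (hb : Measurable b)
    (ha0 : ∀ᵐ ω ∂P, 0 ≤ a ω ∧ a ω ≤ 1) (hb0 : ∀ᵐ ω ∂P, 0 ≤ b ω ∧ b ω ≤ 1)
    (h : ∀ f : ℝ × ℝ → ℝ, Measurable f → (∃ C, ∀ p, |f p| ≤ C) →
      ∀ h : 𝓧 → ℝ, Measurable h → (∃ C, ∀ x, |h x| ≤ C) →
        ∫ ω, a ω * f (V ω) * h (X ω) ∂P = ∫ ω, b ω * f (V ω) * h (X ω) ∂P)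
    (F : (ℝ × ℝ) × 𝓧 → ℝ) (hF : Measurable F)
    (hi : Integrable (fun ω => a ω * F (V ω, X ω)) P) :
    Integrable (fun ω => b ω * F (V ω, X ω)) P ∧
      ∫ ω, a ω * F (V ω, X ω) ∂P = ∫ ω, b ω * F (V ω, X ω) ∂P := by
  set T : Ω → (ℝ × ℝ) × 𝓧 := fun ω => (V ω, X ω) with hT
  have hTm : Measurable T := hV.prodMk hX
  have aux : ∀ c : Ω → ℝ, Measurable c → (∀ᵐ ω ∂P, 0 ≤ c ω ∧ c ω ≤ 1) →
      IsFiniteMeasure ((P.withDensity fun ω => ENNReal.ofReal (c ω)).map T) ∧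
      (∀ s t, MeasurableSet s → MeasurableSet t →
        ((P.withDensity fun ω => ENNReal.ofReal (c ω)).map T) (s ×ˢ t)
          = ENNReal.ofReal (∫ ω, c ω * ind s (V ω) * ind t (X ω) ∂P)) ∧
      (Integrable F ((P.withDensity fun ω => ENNReal.ofReal (c ω)).map T) ↔
        Integrable (fun ω => c ω * F (T ω)) P) ∧
      ∫ z, F z ∂((P.withDensity fun ω => ENNReal.ofReal (c ω)).map T)
        = ∫ ω, c ω * F (T ω) ∂P := by
    intro c hc hc0
    have hci : Integrable c P := by
      refine Integrable.of_bound hc.aestronglyMeasurable 1 ?_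
      filter_upwards [hc0] with ω hω
      rw [Real.norm_eq_abs, abs_le]; constructor <;> linarith [hω.1, hω.2]
    have hfin : IsFiniteMeasure (P.withDensity fun ω => ENNReal.ofReal (c ω)) :=
      isFiniteMeasure_withDensity_ofReal hci.2
    refine ⟨inferInstance, ?_, ?_, ?_⟩
    · intro s t hs ht
      have hst : MeasurableSet (T ⁻¹' (s ×ˢ t)) := hTm (hs.prod ht)
      rw [Measure.map_apply hTm (hs.prod ht), withDensity_apply _ hst,
        ← ofReal_integral_eq_lintegral_ofReal hci.integrableOn
          (ae_restrict_of_ae (hc0.mono fun ω h => h.1)), ← integral_indicator hst]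
      congr 2
      funext ω
      by_cases h1 : V ω ∈ s <;> by_cases h2 : X ω ∈ t <;> simp [hT, ind, h1, h2]
    · rw [integrable_map_measure hF.aestronglyMeasurable hTm.aemeasurable,
        integrable_withDensity_iff_integrable_smul' hc.ennreal_ofReal
          (Filter.Eventually.of_forall fun _ => ENNReal.ofReal_lt_top)]
      refine integrable_congr ?_
      filter_upwards [hc0] with ω hω
      simp [ENNReal.toReal_ofReal hω.1]
    · rw [integral_map hTm.aemeasurable hF.aestronglyMeasurable,
        integral_withDensity_eq_integral_toReal_smul hc.ennreal_ofReal
          (Filter.Eventually.of_forall fun _ => ENNReal.ofReal_lt_top)]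
      refine integral_congr_ae ?_
      filter_upwards [hc0] with ω hω
      simp [ENNReal.toReal_ofReal hω.1]
  obtain ⟨fa, ra, ia, ea⟩ := aux a ha ha0
  obtain ⟨fb, rb, ib, eb⟩ := aux b hb hb0
  have hμ : (P.withDensity fun ω => ENNReal.ofReal (a ω)).map T
      = (P.withDensity fun ω => ENNReal.ofReal (b ω)).map T := by
    refine Measure.ext_prod ?_
    intro s t hs ht
    rw [ra s t hs ht, rb s t hs ht,
      h _ (ind_meas hs) ⟨1, ind_abs s⟩ _ (ind_meas ht) ⟨1, ind_abs t⟩]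
  exact ⟨ib.1 (hμ ▸ ia.2 hi), by rw [← ea, ← eb, hμ]⟩

lemma mar_path [MeasurableSpace Ω] [m𝓧 : MeasurableSpace 𝓧]
    (P : Measure Ω) [IsProbabilityMeasure P] (X : Ω → 𝓧) (hX : Measurable X)
    (Y0 Y2 D1 D2 S : Ω → ℝ)
    (hY0 : Measurable Y0) (hY2 : Measurable Y2)
    (hD1 : Measurable D1) (hD2 : Measurable D2) (hS : Measurable S)
    (hSv : ∀ ω, S ω = 0 ∨ S ω = 1)
    (q : ℝ → 𝓧 → ℝ) (hMAR : MAR P X D1 D2 S Y0 Y2 q)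
    (e : ℝ × ℝ) (he : e.2 ∈ ({0, 1} : Set ℝ)) (w : 𝓧 → ℝ) (hw : Measurable w)
    (hi : Integrable (fun ω => S ω / q (D2 ω) (X ω) * (w (X ω) * ind (evD D1 D2 e) ω)
      * (Y2 ω - Y0 ω)) P) :
    Integrable (fun ω => w (X ω) * (ind (evD D1 D2 e) ω * (Y2 ω - Y0 ω))) P ∧
    ∫ ω, S ω / q (D2 ω) (X ω) * (w (X ω) * ind (evD D1 D2 e) ω) * (Y2 ω - Y0 ω) ∂P
      = ∫ ω, w (X ω) * (ind (evD D1 D2 e) ω * (Y2 ω - Y0 ω)) ∂P := by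
  obtain ⟨hq, hqp, hM⟩ := hMAR
  have hqm : Measurable (q e.2) := (hq e.2 he).1
  have hE2 : MeasurableSet (evD2 D2 e.2) := hD2 (measurableSet_singleton e.2)
  set F : (ℝ × ℝ) × 𝓧 → ℝ :=
    fun z => ind ({e.1} : Set ℝ) z.1.1 * z.1.2 * (w z.2 / q e.2 z.2) with hF
  have hFm : Measurable F := by
    have h1 : Measurable (ind ({e.1} : Set ℝ)) := ind_meas (measurableSet_singleton _)
    have h2 : Measurable fun x => w x / q e.2 x := hw.div hqm
    exact ((h1.comp (measurable_fst.comp measurable_fst)).mul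
      (measurable_snd.comp measurable_fst)).mul (h2.comp measurable_snd)
  have E1 : (fun ω => S ω / q (D2 ω) (X ω) * (w (X ω) * ind (evD D1 D2 e) ω)
      * (Y2 ω - Y0 ω)) = fun ω => (ind (evD2 D2 e.2) ω * S ω)
        * F ((D1 ω, Y2 ω - Y0 ω), X ω) := by
    funext ω
    by_cases h1 : D1 ω = e.1 <;> by_cases h2 : D2 ω = e.2 <;>
      simp [hF, ind, evD, evD2, h1, h2]
    ring
  have E2 : (fun ω => (ind (evD2 D2 e.2) ω * q e.2 (X ω)) * F ((D1 ω, Y2 ω - Y0 ω), X ω))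
      =ᵐ[P] fun ω => w (X ω) * (ind (evD D1 D2 e) ω * (Y2 ω - Y0 ω)) := by
    filter_upwards [hqp e.2 he] with ω hω
    have := hω.1.ne'
    by_cases h1 : D1 ω = e.1 <;> by_cases h2 : D2 ω = e.2 <;>
      simp [hF, ind, evD, evD2, h1, h2]
    field_simp
  have h01 : ∀ ω, 0 ≤ ind (evD2 D2 e.2) ω ∧ ind (evD2 D2 e.2) ω ≤ 1 := by
    intro ω
    by_cases h : ω ∈ evD2 D2 e.2 <;> simp [ind, h]
  have R := mar_ext P X hX (fun ω => (D1 ω, Y2 ω - Y0 ω)) (hD1.prodMk (hY2.sub hY0))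
    (fun ω => ind (evD2 D2 e.2) ω * S ω) (fun ω => ind (evD2 D2 e.2) ω * q e.2 (X ω))
    ((ind_meas hE2).mul hS) ((ind_meas hE2).mul (hqm.comp hX))
    (Filter.Eventually.of_forall fun ω => by
      rcases hSv ω with h | h <;> simp [h, h01 ω])
    (by
      filter_upwards [hqp e.2 he] with ω hω
      exact ⟨mul_nonneg (h01 ω).1 hω.1.le, mul_le_one₀ (h01 ω).2 hω.1.le hω.2⟩)
    (hM e.2 he) F hFm (E1 ▸ hi)
  rw [E1]
  exact ⟨(integrable_congr E2).1 R.1, R.2.trans (integral_congr_ae E2)⟩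

/-- Corollary 2, part 2: missingness-adjusted inverse probability weighting identifies
the PDATT. -/
theorem statement_9
    [MeasurableSpace Ω] [m𝓧 : MeasurableSpace 𝓧]
    (P : Measure Ω) [IsProbabilityMeasure P]
    (X : Ω → 𝓧) (hX : Measurable X)
    (Y0 Y2 D1 D2 S : Ω → ℝ)
    (hY0 : Measurable Y0) (hY2 : Measurable Y2)
    (hD1 : Measurable D1) (hD2 : Measurable D2) (hS : Measurable S)
    (hY0i : Integrable Y0 P) (hY2i : Integrable Y2 P)
    (hD1v : ∀ ω, D1 ω = 0 ∨ D1 ω = 1) (hD2v : ∀ ω, D2 ω = 0 ∨ D2 ω = 1)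
    (hSv : ∀ ω, S ω = 0 ∨ S ω = 1)
    (Y0p Y2p : ℝ × ℝ → Ω → ℝ)
    (hY0p : ∀ e ∈ allPaths, Measurable (Y0p e) ∧ Integrable (Y0p e) P)
    (hY2p : ∀ e ∈ allPaths, Measurable (Y2p e) ∧ Integrable (Y2p e) P)
    (hcons0 : ∀ ω, Y0 ω = Y0p (D1 ω, D2 ω) ω)
    (hcons2 : ∀ ω, Y2 ω = Y2p (D1 ω, D2 ω) ω)
    (d : ℝ × ℝ) (hd : d ∈ threePaths) (hPd : 0 < P (evD D1 D2 d))
    (hDIDd : DID P X D1 D2 Y0p Y2p d) (hDIDd' : DID P X D1 D2 Y0p Y2p (0, 0))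
    (q : ℝ → 𝓧 → ℝ) (hMAR : MAR P X D1 D2 S Y0 Y2 q)
    (pd pd' : 𝓧 → ℝ)
    (hpd : IsCondMeanGiven P X Set.univ (ind (evD D1 D2 d)) pd)
    (hpd' : IsCondMeanGiven P X Set.univ (ind (evD D1 D2 (0, 0))) pd')
    (hpdpos : ∀ᵐ ω ∂P, 0 < pd (X ω)) (hpd'pos : ∀ᵐ ω ∂P, 0 < pd' (X ω))
    (hpdi : Integrable (fun ω => pd (X ω)) P)
    (hfin : Integrable (fun ω =>
        S ω / q (D2 ω) (X ω)
          * (ind (evD D1 D2 d) ω - pd (X ω) / pd' (X ω) * ind (evD D1 D2 (0, 0)) ω)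
          * (Y2 ω - Y0 ω)) P) :
    (∫ ω, pd (X ω) ∂P)⁻¹
        * ∫ ω, S ω / q (D2 ω) (X ω)
            * (ind (evD D1 D2 d) ω - pd (X ω) / pd' (X ω) * ind (evD D1 D2 (0, 0)) ω)
            * (Y2 ω - Y0 ω) ∂P
      = tau P D1 D2 Y2p d := by
  have hdA : d ∈ allPaths := by
    simp only [threePaths, allPaths, Set.mem_insert_iff, Set.mem_singleton_iff] at hd ⊢
    tauto
  have h0A : ((0 : ℝ), (0 : ℝ)) ∈ allPaths := by simp [allPaths]
  have hd2 : d.2 ∈ ({0, 1} : Set ℝ) := by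
    simp only [threePaths, Set.mem_insert_iff, Set.mem_singleton_iff] at hd ⊢
    rcases hd with rfl | rfl | rfl <;> simp
  have hdne : d ≠ (0, 0) := by
    simp only [threePaths, Set.mem_insert_iff, Set.mem_singleton_iff] at hd
    rcases hd with rfl | rfl | rfl <;> simp
  have hmE : ∀ e : ℝ × ℝ, MeasurableSet (evD D1 D2 e) := fun e =>
    (hD1 (measurableSet_singleton e.1)).inter (hD2 (measurableSet_singleton e.2))
  have hdisj : ∀ ω, ω ∈ evD D1 D2 d → ω ∉ evD D1 D2 (0, 0) := by
    rintro ω ⟨h1, h2⟩ ⟨h3, h4⟩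
    exact hdne (Prod.ext (h1.symm.trans h3) (h2.symm.trans h4))
  set A := evD D1 D2 d with hAdef
  set A0 := evD D1 D2 (0, 0) with hA0def
  have hAm : MeasurableSet A := hmE d
  have hA0m : MeasurableSet A0 := hmE (0, 0)
  set Z : Ω → ℝ := fun ω => Y2p (0, 0) ω - Y0p (0, 0) ω with hZdef
  have hZi : Integrable Z P := (hY2p _ h0A).2.sub (hY0p _ h0A).2
  have hm : m𝓧.comap X ≤ ‹MeasurableSpace Ω› := hX.comap_le
  have hXm : Measurable[m𝓧.comap X] X := comap_measurable X
  set w : 𝓧 → ℝ := fun x => pd x / pd' x with hwdef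
  have hwm : Measurable w := hpd.1.div hpd'.1
  have hi1 : Integrable (fun ω => S ω / q (D2 ω) (X ω) * ((fun _ => (1:ℝ)) (X ω) * ind A ω)
      * (Y2 ω - Y0 ω)) P := by
    refine (ind_mul_int hAm hfin).congr (Filter.Eventually.of_forall fun ω => ?_)
    by_cases h : ω ∈ A
    · simp [ind, h, hdisj ω h]
    · simp [ind, h]
  have hi2 : Integrable (fun ω => S ω / q (D2 ω) (X ω) * (w (X ω) * ind A0 ω)
      * (Y2 ω - Y0 ω)) P := by
    refine (ind_mul_int hA0m hfin).neg.congr (Filter.Eventually.of_forall fun ω => ?_)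
    by_cases h : ω ∈ A0
    · have : ω ∉ A := fun h' => hdisj ω h' h
      simp [ind, h, this, hwdef]
    · simp [ind, h]
  obtain ⟨-, M1⟩ := mar_path P X hX Y0 Y2 D1 D2 S hY0 hY2 hD1 hD2 hS hSv q hMAR d hd2
    (fun _ => 1) measurable_const hi1
  obtain ⟨J2, M2⟩ := mar_path P X hX Y0 Y2 D1 D2 S hY0 hY2 hD1 hD2 hS hSv q hMAR (0, 0)
    (by simp) w hwm hi2
  have hsplit : ∫ ω, S ω / q (D2 ω) (X ω)
            * (ind A ω - pd (X ω) / pd' (X ω) * ind A0 ω) * (Y2 ω - Y0 ω) ∂P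
      = ∫ ω, 1 * (ind A ω * (Y2 ω - Y0 ω)) ∂P
        - ∫ ω, w (X ω) * (ind A0 ω * (Y2 ω - Y0 ω)) ∂P := by
    rw [← M1, ← M2, ← integral_sub hi1 hi2]
    refine integral_congr_ae (Filter.Eventually.of_forall fun ω => ?_)
    simp only [hwdef]; ring
  -- identify the outcomes on the two events
  have hA0Z : (fun ω => w (X ω) * (ind A0 ω * (Y2 ω - Y0 ω)))
      = (fun ω => w (X ω)) * fun ω => ind A0 ω * Z ω := by
    funext ω
    by_cases h : ω ∈ A0
    · have h1 : D1 ω = 0 := h.1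
      have h2 : D2 ω = 0 := h.2
      simp [hcons0 ω, hcons2 ω, h1, h2, hZdef]
    · simp [ind, h]
  have hAY : (fun ω => 1 * (ind A ω * (Y2 ω - Y0 ω)))
      = fun ω => ind A ω * Y2p d ω - ind A ω * Y0p d ω := by
    funext ω
    by_cases h : ω ∈ A
    · have h1 : D1 ω = d.1 := h.1
      have h2 : D2 ω = d.2 := h.2
      simp [hcons0 ω, hcons2 ω, h1, h2]; ring
    · simp [ind, h]
  rw [hA0Z] at J2
  -- conditional expectations
  have hone : P[ind (Set.univ : Set Ω) | m𝓧.comap X] = fun _ => (1 : ℝ) := by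
    have : ind (Set.univ : Set Ω) = fun _ => (1 : ℝ) := by funext ω; simp [ind]
    rw [this, condExp_const hm]
  have huniv : ∀ W : Ω → ℝ, (fun ω => ind (Set.univ : Set Ω) ω * W ω) = W := by
    intro W; funext ω; simp [ind]
  have cuniv : ∀ (W : Ω → ℝ) (g : 𝓧 → ℝ), Integrable W P →
      IsCondMeanGiven P X Set.univ W g → P[W | m𝓧.comap X] =ᵐ[P] fun ω => g (X ω) := by
    intro W g hW hg
    have := condMean_condExp P X hX Set.univ MeasurableSet.univ W hW g hg
    rw [huniv W, hone] at this
    simpa using this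
  have hindi : ∀ B : Set Ω, MeasurableSet B → Integrable (ind B) P := fun B hB =>
    (integrable_const (1:ℝ)).indicator hB
  have c1 := cuniv _ _ (hindi A hAm) hpd
  have c2 := cuniv _ _ (hindi A0 hA0m) hpd'
  obtain ⟨na, tr, t1, t2⟩ := hDIDd
  obtain ⟨-, tr', t1', t2'⟩ := hDIDd'
  have c3 := cuniv _ _ hZi t1
  have c3' := cuniv _ _ hZi t1'
  have c4 := condMean_condExp P X hX A hAm Z hZi tr t2
  have c4' := condMean_condExp P X hX A0 hA0m Z hZi tr' t2'
  have hswm : StronglyMeasurable[m𝓧.comap X] (fun ω => w (X ω)) :=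
    (hwm.comp hXm).stronglyMeasurable
  have c5 := condExp_mul_of_stronglyMeasurable_left hswm J2 (ind_mul_int hA0m hZi)
  have hW : ∫ ω, ((fun ω => w (X ω)) * fun ω => ind A0 ω * Z ω) ω ∂P
      = ∫ ω, ind A ω * Z ω ∂P := by
    rw [← integral_condExp hm, ← integral_condExp hm (f := fun ω => ind A ω * Z ω)]
    refine integral_congr_ae ?_
    filter_upwards [c1, c2, c3, c3', c4, c4', c5, hpd'pos] with ω a1 a2 a3 a3' a4 a4' a5 hp
    rw [a5, a4, Pi.mul_apply, a4', a1, a2, ← a3, ← a3', ← mul_assoc]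
    simp only [hwdef]
    rw [div_mul_cancel₀ _ hp.ne']
  have hP : ∫ ω, pd (X ω) ∂P = (P A).toReal := by
    rw [← integral_congr_ae c1, integral_condExp hm]
    simp only [ind]
    rw [integral_indicator hAm]
    simp [Measure.real]
  have hna := na (fun _ => 1) measurable_const ⟨1, fun _ => by simp⟩
  simp only [mul_one] at hna
  have iY2 := ind_mul_int hAm (hY2p d hdA).2
  have iY0 := ind_mul_int hAm (hY0p d hdA).2
  have iY20 := ind_mul_int hAm (hY2p _ h0A).2
  have iY00 := ind_mul_int hAm (hY0p _ h0A).2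
  rw [hsplit, hA0Z, hW, hAY, integral_sub iY2 iY0, hna, hP, tau, ← integral_indicator hAm,
    ← ind_mul]
  congr 1
  have z1 : ∫ ω, ind A ω * Z ω ∂P
      = ∫ ω, ind A ω * Y2p (0, 0) ω ∂P - ∫ ω, ind A ω * Y0p (0, 0) ω ∂P := by
    rw [← integral_sub iY20 iY00]
    simp only [hZdef, mul_sub]
  have z2 : ∫ ω, ind A ω * (Y2p d ω - Y2p (0, 0) ω) ∂P
      = ∫ ω, ind A ω * Y2p d ω ∂P - ∫ ω, ind A ω * Y2p (0, 0) ω ∂P := by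
    rw [← integral_sub iY2 iY20]
    simp only [mul_sub]
  rw [z1, z2]; ring

end DIDMissing
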